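/- (Monotonicity of the noncentral chi-square CDF in the noncentrality parameter.) For every integer m ≥ 1, all noncentralities 0 ≤ δ ≤ δ′, and every x ∈ ℝ, one has H_m(x; δ′) ≤ H_m(x; δ). -/

import Mathlib

open MeasureTheory

/-- CDF of the central chi-square distribution with `d` degrees of freedom,
i.e. the Gamma distribution with shape `d/2` and rate `1/2`. -/
noncomputable def chiSqCDF (d : ℕ) (x : ℝ) : ℝ :=
  if 0 ≤ x then
    ∫ t in (0 : ℝ)..x,
      ((1 / 2 : ℝ) ^ ((d : ℝ) / 2) / Real.Gamma ((d : ℝ) / 2)) *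
        t ^ ((d : ℝ) / 2 - 1) * Real.exp (-t / 2)
  else 0

/-- CDF of the noncentral chi-square distribution with `m` degrees of freedom and
noncentrality `δ`: `H_m(x; δ) = Σⱼ e^{−δ/2} (δ/2)ʲ/j! · G_{m+2j}(x)`. -/
noncomputable def ncChiSqCDF (m : ℕ) (δ x : ℝ) : ℝ :=
  ∑' j : ℕ, Real.exp (-δ / 2) * (δ / 2) ^ j / (Nat.factorial j) * chiSqCDF (m + 2 * j) x

/-!
`H_m(x; δ)` is the mean of `G_{m+2J}(x)` for a Poisson variable `J` of mean `δ/2`. A Poisson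
variable of larger mean is distributed as the sum of `J` and an independent `ℕ`-valued variable, so
the mean of an antitone function of it can only be smaller. That `j ↦ G_{m+2j}(x)` is antitone
follows from the recurrence of the incomplete Gamma function: raising the shape `a` by one, at rate
`r`, lowers the CDF by `(r x)^a e^{-r x} / Γ(a + 1) ≥ 0`.
-/

open ProbabilityTheory Set
open scoped NNReal

section Poisson

theorem integral_conv_le_of_antitone {M : Type*} [AddMonoid M] [Preorder M]
    [CanonicallyOrderedAdd M] [MeasurableSpace M] [MeasurableAdd₂ M] {μ ν : Measure M} [SFinite μ]
    [IsProbabilityMeasure ν] {f : M → ℝ} (hf : Antitone f) (hfμ : Integrable f μ)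
    (hfμν : Integrable f (μ ∗ ν)) :
    ∫ z, f z ∂(μ ∗ ν) ≤ ∫ x, f x ∂μ := by
  have hprod : Integrable (fun p : M × M ↦ f (p.1 + p.2)) (μ.prod ν) :=
    hfμν.comp_measurable (by fun_prop)
  calc ∫ z, f z ∂(μ ∗ ν)
      = ∫ p, f (p.1 + p.2) ∂μ.prod ν :=
        integral_map (by fun_prop) hfμν.aestronglyMeasurable
    _ ≤ ∫ p, f p.1 ∂μ.prod ν :=
        integral_mono hprod (hfμ.comp_fst ν) fun _ ↦ hf le_self_add
    _ = ∫ x, f x ∂μ := by simp [integral_fun_fst]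

theorem antitone_integral_poissonMeasure {f : ℕ → ℝ} (hf : Antitone f)
    (hbdd : BddBelow (range f)) : Antitone fun r : ℝ≥0 ↦ ∫ n, f n ∂poissonMeasure r := by
  obtain ⟨b, hb⟩ := hbdd
  have hInt (r : ℝ≥0) : Integrable f (poissonMeasure r) :=
    .of_mem_Icc b (f 0) .of_discrete (ae_of_all _ fun n ↦ ⟨hb ⟨n, rfl⟩, hf n.zero_le⟩)
  intro r s hrs
  obtain ⟨t, rfl⟩ := exists_add_of_le hrs
  have hconv := poissonMeasure_conv_poissonMeasure r t
  simp only [← hconv]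
  exact integral_conv_le_of_antitone hf (hInt r) (hconv ▸ hInt (r + t))

end Poisson

section Gamma

variable {a r x : ℝ}

theorem integrable_gammaPDFReal (ha : 0 < a) (hr : 0 < r) : Integrable (gammaPDFReal a r) := by
  refine ⟨by fun_prop, ?_⟩
  rw [hasFiniteIntegral_iff_ofReal (ae_of_all _ (gammaPDFReal_nonneg ha hr))]
  exact (lintegral_gammaPDF_eq_one ha hr).trans_lt ENNReal.one_lt_top

theorem cdf_gammaMeasure_of_nonpos (ha : 0 < a) (hr : 0 < r) (hx : x ≤ 0) :
    cdf (gammaMeasure a r) x = 0 := by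
  rw [cdf_gammaMeasure_eq_integral ha hr, integral_Iic_eq_integral_Iio]
  exact setIntegral_eq_zero_of_forall_eq_zero fun t ht ↦ if_neg (lt_of_lt_of_le ht hx).not_ge

theorem cdf_gammaMeasure_eq_intervalIntegral (ha : 0 < a) (hr : 0 < r) (x : ℝ) :
    cdf (gammaMeasure a r) x = ∫ t in 0..x, gammaPDFReal a r t := by
  have hInt := integrable_gammaPDFReal ha hr
  rw [← intervalIntegral.integral_Iic_sub_Iic hInt.integrableOn hInt.integrableOn,
    ← cdf_gammaMeasure_eq_integral ha hr, ← cdf_gammaMeasure_eq_integral ha hr,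
    cdf_gammaMeasure_of_nonpos ha hr le_rfl, sub_zero]

theorem hasDerivAt_rpow_mul_exp_neg_div_Gamma (ha : 0 < a) (hr : 0 < r) (hx : 0 < x) :
    HasDerivAt (fun t ↦ (r * t) ^ a * Real.exp (-(r * t)) / Real.Gamma (a + 1))
      (gammaPDFReal a r x - gammaPDFReal (a + 1) r x) x := by
  have hlin : HasDerivAt (fun t ↦ r * t) r x := by simpa using (hasDerivAt_id x).const_mul r
  have hexp : HasDerivAt (fun t ↦ Real.exp (-(r * t))) (Real.exp (-(r * x)) * -r) x :=
    hlin.neg.exp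
  have hpow := hlin.rpow_const (p := a) (.inl (mul_pos hr hx).ne')
  refine ((hpow.mul hexp).div_const (Real.Gamma (a + 1))).congr_deriv ?_
  simp only [gammaPDFReal, if_pos hx.le, Real.Gamma_add_one ha.ne', Real.mul_rpow hr.le hx.le,
    Real.rpow_sub_one hr.ne', Real.rpow_sub_one hx.ne', Real.rpow_add_one hr.ne',
    add_sub_cancel_right]
  field_simp
  ring

theorem cdf_gammaMeasure_add_one (ha : 0 < a) (hr : 0 < r) (hx : 0 ≤ x) :
    cdf (gammaMeasure (a + 1) r) x =
      cdf (gammaMeasure a r) x - (r * x) ^ a * Real.exp (-(r * x)) / Real.Gamma (a + 1) := by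
  have ha' : 0 < a + 1 := by positivity
  have hInt := (integrable_gammaPDFReal ha hr).intervalIntegrable (a := 0) (b := x)
  have hInt' := (integrable_gammaPDFReal ha' hr).intervalIntegrable (a := 0) (b := x)
  have hcont : Continuous fun t ↦ (r * t) ^ a * Real.exp (-(r * t)) / Real.Gamma (a + 1) := by
    have hpow := Real.continuous_rpow_const ha.le
    fun_prop
  have hFTC := intervalIntegral.integral_eq_sub_of_hasDerivAt_of_le hx hcont.continuousOn
    (fun t ht ↦ hasDerivAt_rpow_mul_exp_neg_div_Gamma ha hr ht.1) (hInt.sub hInt')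
  rw [intervalIntegral.integral_sub hInt hInt', ← cdf_gammaMeasure_eq_intervalIntegral ha hr,
    ← cdf_gammaMeasure_eq_intervalIntegral ha' hr, mul_zero, Real.zero_rpow ha.ne', zero_mul,
    zero_div, sub_zero] at hFTC
  linarith

theorem cdf_gammaMeasure_add_one_le (ha : 0 < a) (hr : 0 < r) (x : ℝ) :
    cdf (gammaMeasure (a + 1) r) x ≤ cdf (gammaMeasure a r) x := by
  rcases le_total x 0 with hx | hx
  · rw [cdf_gammaMeasure_of_nonpos ha hr hx, cdf_gammaMeasure_of_nonpos (by positivity) hr hx]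
  · rw [cdf_gammaMeasure_add_one ha hr hx, sub_le_self_iff]
    positivity

end Gamma

section ChiSq

theorem chiSqCDF_eq_cdf_gammaMeasure {d : ℕ} (hd : 0 < d) (x : ℝ) :
    chiSqCDF d x = cdf (gammaMeasure (d / 2) (1 / 2)) x := by
  have hd' : (0 : ℝ) < d / 2 := by positivity
  rw [chiSqCDF]
  split_ifs with hx
  · rw [cdf_gammaMeasure_eq_intervalIntegral hd' one_half_pos]
    refine intervalIntegral.integral_congr fun t ht ↦ ?_
    rw [uIcc_of_le hx] at ht
    simp only [gammaPDFReal, if_pos ht.1]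
    ring_nf
  · rw [cdf_gammaMeasure_of_nonpos hd' one_half_pos (not_le.1 hx).le]

theorem chiSqCDF_nonneg {d : ℕ} (hd : 0 < d) (x : ℝ) : 0 ≤ chiSqCDF d x :=
  chiSqCDF_eq_cdf_gammaMeasure hd x ▸ cdf_nonneg _ x

theorem chiSqCDF_add_two_le {d : ℕ} (hd : 0 < d) (x : ℝ) : chiSqCDF (d + 2) x ≤ chiSqCDF d x := by
  have hshape : ((d + 2 : ℕ) : ℝ) / 2 = d / 2 + 1 := by push_cast; ring
  rw [chiSqCDF_eq_cdf_gammaMeasure hd, chiSqCDF_eq_cdf_gammaMeasure (by positivity), hshape]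
  exact cdf_gammaMeasure_add_one_le (by positivity) one_half_pos x

theorem antitone_chiSqCDF_add_two_mul {m : ℕ} (hm : 0 < m) (x : ℝ) :
    Antitone fun j : ℕ ↦ chiSqCDF (m + 2 * j) x :=
  antitone_nat_of_succ_le fun j ↦ chiSqCDF_add_two_le (d := m + 2 * j) (by positivity) x

theorem ncChiSqCDF_eq_integral_poissonMeasure (m : ℕ) {δ : ℝ} (hδ : 0 ≤ δ) (x : ℝ) :
    ncChiSqCDF m δ x = ∫ j, chiSqCDF (m + 2 * j) x ∂poissonMeasure (δ / 2).toNNReal := by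
  rw [integral_poissonMeasure, ncChiSqCDF, Real.coe_toNNReal _ (by positivity)]
  simp only [smul_eq_mul, neg_div]

end ChiSq

/-- **Monotonicity of the noncentral chi-square CDF in the noncentrality parameter:**
for `0 ≤ δ ≤ δ′`, `H_m(x; δ′) ≤ H_m(x; δ)`. -/
theorem ncChiSqCDF_anti_noncentrality (m : ℕ) (hm : 1 ≤ m) (δ δ' : ℝ)
    (hδ : 0 ≤ δ) (hδδ' : δ ≤ δ') (x : ℝ) :
    ncChiSqCDF m δ' x ≤ ncChiSqCDF m δ x := by
  have hbdd : BddBelow (range fun j : ℕ ↦ chiSqCDF (m + 2 * j) x) :=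
    ⟨0, forall_mem_range.2 fun j ↦ chiSqCDF_nonneg (by positivity) x⟩
  rw [ncChiSqCDF_eq_integral_poissonMeasure m hδ,
    ncChiSqCDF_eq_integral_poissonMeasure m (hδ.trans hδδ')]
  exact antitone_integral_poissonMeasure (antitone_chiSqCDF_add_two_mul hm x) hbdd
    (Real.toNNReal_le_toNNReal (by gcongr))
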